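/- arXiv:1909.11847 — 2 statements merged into one kernel-verified Lean document; each statement's English description precedes it below -/
import Mathlib

section
/- For every pliable-index-coding problem P(m,U) and every field size q, β_q(P(m,U)) = m if and only if U = 2^{[1:m]} \ {[1:m]}, i.e., if and only if every proper subset of [1:m] is present as a receiver. -/
/-!
Upper bound: sending all messages uncoded always works, so the rate is at most `m`.

If every proper subset is a receiver, any valid encoder is injective. Suppose `E x = E y` and let
`H` be the set of coordinates on which `x` and `y` agree. If `H` were proper, receiver `H` would see
the same data for `x` and `y`, hence decode the same value `x i = y i` for some `i ∉ H`, which is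
absurd. Counting then gives `|F| ^ m ≤ |F| ^ ℓ`.

If a proper subset `H` is absent, fix `i₀ ∉ H` and send `x j` for `j ∈ H` and `x j - x i₀` for
`j ∉ H`, `j ≠ i₀`: this is a code of length `m - 1`. A receiver `K` not containing `H` reads off a
message in `H \ K`. A receiver `K` strictly containing `H` knows some `x k` with `k ∉ H`, and the
differences then give it all messages outside `H`.
-/

/-- `E` is a valid pliable index code for the problem with `m` messages over the field `F`
and receiver set `U`: every present receiver `H ∈ U` can decode some message `Xᵢ` with
`i ∉ H` from the codeword and its side information `X_H`. The codeword coordinates are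
indexed by an arbitrary type `ι`. -/
def IsPliableCode (F : Type) [Field F] {m : ℕ} (U : Set (Set (Fin m)))
    {ι : Type} (E : (Fin m → F) → ι → F) : Prop :=
  ∀ H ∈ U, ∃ i : Fin m, i ∉ H ∧ ∃ dec : (ι → F) → (H → F) → F,
    ∀ x : Fin m → F, dec (E x) (fun j => x j.1) = x i

/-- `β_q(P(m,U))`: the minimum length `ℓ` of a pliable index code for the problem. -/
noncomputable def pliableRate (F : Type) [Field F] (m : ℕ)
    (U : Set (Set (Fin m))) : ℕ :=
  sInf {ℓ : ℕ | ∃ E : (Fin m → F) → Fin ℓ → F, IsPliableCode F U E}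

/-- A code is valid iff each receiver has a message outside its side information on which any two
inputs it cannot distinguish agree. -/
theorem isPliableCode_iff {F : Type} [Field F] {m : ℕ} {U : Set (Set (Fin m))} {ι : Type}
    {E : (Fin m → F) → ι → F} :
    IsPliableCode F U E ↔ ∀ H ∈ U, ∃ i : Fin m, i ∉ H ∧
      ∀ x y : Fin m → F, E x = E y → (∀ j ∈ H, x j = y j) → x i = y i := by
  refine forall₂_congr fun H _ => exists_congr fun i => and_congr_right fun _ => ⟨?_, fun h => ?_⟩
  · rintro ⟨dec, hdec⟩ x y hE hxy
    have hside : (fun j : H => x j.1) = fun j : H => y j.1 := funext fun j => hxy j.1 j.2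
    rw [← hdec x, ← hdec y, hE, hside]
  · classical
    -- Decode by picking any input compatible with the received data.
    refine ⟨fun c s => if hx : ∃ x, E x = c ∧ (fun j : H => x j.1) = s
      then hx.choose i else 0, fun x => ?_⟩
    have hx : ∃ x', E x' = E x ∧ (fun j : H => x' j.1) = fun j : H => x j.1 := ⟨x, rfl, rfl⟩
    simp only [dif_pos hx]
    exact h _ _ hx.choose_spec.1 fun j hj => congrFun hx.choose_spec.2 ⟨j, hj⟩

theorem isPliableCode_id {F : Type} [Field F] {m : ℕ} {U : Set (Set (Fin m))}
    (hU : ∀ H ∈ U, H ≠ Set.univ) : IsPliableCode F U (fun x : Fin m → F => x) := by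
  rw [isPliableCode_iff]
  intro H hH
  obtain ⟨i, hi⟩ := (Set.ne_univ_iff_exists_notMem H).1 (hU H hH)
  exact ⟨i, hi, fun x y hxy _ => congrFun hxy i⟩

theorem IsPliableCode.injective {F : Type} [Field F] {m : ℕ} {ι : Type}
    {E : (Fin m → F) → ι → F}
    (hE : IsPliableCode F {H : Set (Fin m) | H ≠ Set.univ} E) : Function.Injective E := by
  rw [isPliableCode_iff] at hE
  intro x y hxy
  by_contra hne
  obtain ⟨i, hi, h⟩ := hE {j | x j = y j} fun huniv =>
    hne (funext fun j => (Set.eq_univ_iff_forall.1 huniv) j)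
  exact hi (h x y hxy fun j hj => hj)

/-- An absent proper subset `H` allows the code that sends the messages in `H` uncoded and, for the
other messages, their differences with one fixed message outside `H`. -/
theorem exists_isPliableCode_of_absent {F : Type} [Field F] {n : ℕ} {U : Set (Set (Fin (n + 1)))}
    (hU : ∀ H ∈ U, H ≠ Set.univ) {H : Set (Fin (n + 1))} (hH : H ≠ Set.univ) (hHU : H ∉ U) :
    ∃ E : (Fin (n + 1) → F) → Fin n → F, IsPliableCode F U E := by
  classical
  obtain ⟨i₀, hi₀⟩ := (Set.ne_univ_iff_exists_notMem H).1 hH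
  let f : (Fin (n + 1) → F) → Fin (n + 1) → F := fun x j => if j ∈ H then x j else x j - x i₀
  refine ⟨fun x k => f x (i₀.succAbove k), ?_⟩
  rw [isPliableCode_iff]
  intro K hK
  -- The omitted coordinate `i₀` of `f` is identically zero, so the codeword determines `f`.
  have hf : ∀ x y : Fin (n + 1) → F,
      (fun k => f x (i₀.succAbove k)) = (fun k => f y (i₀.succAbove k)) → ∀ j, f x j = f y j := by
    intro x y hxy j
    rcases Fin.eq_self_or_eq_succAbove i₀ j with rfl | ⟨k, rfl⟩
    · simp [f, hi₀]
    · exact congrFun hxy k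
  by_cases hsub : H ⊆ K
  · obtain ⟨k, hkK, hkH⟩ : ∃ k ∈ K, k ∉ H := Set.not_subset.1 fun hKH =>
      hHU (hsub.antisymm hKH ▸ hK)
    obtain ⟨i, hi⟩ := (Set.ne_univ_iff_exists_notMem K).1 (hU K hK)
    refine ⟨i, hi, fun x y hxy hside => ?_⟩
    have h1 := hf x y hxy k
    have h2 := hf x y hxy i
    have h3 := hside k hkK
    simp only [f, if_neg hkH, if_neg fun h => hi (hsub h)] at h1 h2
    linear_combination h2 - h1 + h3
  · obtain ⟨i, hiH, hiK⟩ := Set.not_subset.1 hsub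
    refine ⟨i, hiK, fun x y hxy _ => ?_⟩
    simpa [f, hiH] using hf x y hxy i

/-- β_q(P(m,U)) = m iff every proper subset of [1:m] is a present receiver. -/
theorem pliableRate_eq_m_iff_all_receivers_present
    (F : Type) [Field F] [Fintype F] (m : ℕ) (U : Set (Set (Fin m)))
    (hU : ∀ H ∈ U, H ≠ Set.univ) :
    pliableRate F m U = m ↔ U = {H : Set (Fin m) | H ≠ Set.univ} := by
  constructor
  · intro h
    refine Set.Subset.antisymm hU fun H hH => ?_
    by_contra hHU
    -- A proper subset of `Fin m` exists, so `m` is positive.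
    cases m with
    | zero => exact hH (Set.eq_univ_of_forall fun i => i.elim0)
    | succ n =>
      have hle : pliableRate F (n + 1) U ≤ n :=
        Nat.sInf_le (exists_isPliableCode_of_absent hU hH hHU)
      omega
  · rintro rfl
    refine le_antisymm (Nat.sInf_le ⟨_, isPliableCode_id hU⟩)
      (le_csInf ⟨m, _, isPliableCode_id hU⟩ ?_)
    rintro l ⟨E, hE⟩
    classical
    have hcard := Fintype.card_le_of_injective E hE.injective
    simp only [Fintype.card_fun, Fintype.card_fin] at hcard
    exact (Nat.pow_le_pow_iff_right Fintype.one_lt_card).1 hcard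
end

section
/- Let m = 5 and let U₃ = 2^{[1:5]} \ {[1:5], {1,2,3}, {2,3,4}, {3,4,5}}, i.e., the absent receivers are exactly {1,2,3}, {2,3,4}, and {3,4,5}. Then for every field size q, β_q(P(5,U₃)) = 4. -/
/-- The indices of the messages that are determined by the codeword `E x` together with the
messages indexed by `J`. -/
def determined {F ι : Type} {m : ℕ} (E : (Fin m → F) → ι → F) (J : Set (Fin m)) : Set (Fin m) :=
  {i | ∀ x y : Fin m → F, E x = E y → (∀ j ∈ J, x j = y j) → x i = y i}

/-- A set closed under decoding is not the side information of a present receiver. -/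
lemma determined_notMem {F : Type} [Field F] {m : ℕ} {U : Set (Set (Fin m))} {ι : Type}
    {E : (Fin m → F) → ι → F} (hE : IsPliableCode F U E) (J : Set (Fin m)) :
    determined E J ∉ U := by
  intro hU
  obtain ⟨i, hi, dec, hdec⟩ := hE _ hU
  refine hi fun x y hxy hJ => ?_
  have hside : (fun j : determined E J => x j.1) = fun j => y j.1 :=
    funext fun j => j.2 x y hxy hJ
  rw [← hdec x, ← hdec y, hxy, hside]

/-- If all absent receivers have the same size, some single message together with the codeword
determines every message. -/
lemma exists_determined_singleton {F : Type} [Field F] {m : ℕ} [NeZero m] {A : Set (Set (Fin m))}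
    {ι : Type} {E : (Fin m → F) → ι → F} (hE : IsPliableCode F ({H | H ≠ Set.univ} \ A) E)
    {k : ℕ} (hA : ∀ H ∈ A, H.ncard = k) : ∃ j, determined E {j} = Set.univ := by
  have habs (J : Set (Fin m)) (h : determined E J ≠ Set.univ) : (determined E J).ncard = k :=
    hA _ (by_contra fun h' => determined_notMem hE J ⟨h, h'⟩)
  have hsub (j : Fin m) : determined E ∅ ⊆ determined E {j} :=
    fun i hi x y hxy _ => hi x y hxy (by simp)
  by_cases h0 : determined E ∅ = Set.univ
  · exact ⟨0, Set.univ_subset_iff.mp (h0 ▸ hsub 0)⟩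
  · obtain ⟨j, hj⟩ := (Set.ne_univ_iff_exists_notMem _).mp h0
    refine ⟨j, by_contra fun hne => hj ?_⟩
    rw [Set.eq_of_subset_of_ncard_le (hsub j) (by rw [habs _ hne, habs _ h0])]
    exact fun x y _ h => h j rfl

/-- A code from which one extra message determines everything has length at least `m - 1`. -/
lemma le_length_of_determined {F : Type} [Field F] [Fintype F] {m ℓ : ℕ}
    {E : (Fin m → F) → Fin ℓ → F} {j : Fin m} (hj : determined E {j} = Set.univ) : m ≤ ℓ + 1 := by
  classical
  have hinj : Function.Injective fun x : Fin m → F => (E x, x j) := by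
    intro x y hxy
    obtain ⟨h1, h2⟩ := Prod.mk.inj hxy
    funext i
    have hi : i ∈ determined E {j} := hj ▸ Set.mem_univ i
    exact hi x y h1 (by simpa using h2)
  have hcard := Fintype.card_le_of_injective _ hinj
  simp only [Fintype.card_prod, Fintype.card_fun, Fintype.card_fin, ← pow_succ] at hcard
  exact (Nat.pow_le_pow_iff_right Fintype.one_lt_card).mp hcard

lemma isPliableCode_four (F : Type) [Field F] :
    IsPliableCode F
      ({H : Set (Fin 5) | H ≠ Set.univ} \ {({0,1,2} : Set (Fin 5)), {1,2,3}, {2,3,4}})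
      (fun x : Fin 5 → F => ![x 0, x 1, x 2, x 3 + x 4]) := by
  rintro H ⟨hne, habs⟩
  by_cases h0 : (0 : Fin 5) ∈ H
  swap
  · exact ⟨0, h0, fun c _ => c 0, fun x => by simp⟩
  by_cases h1 : (1 : Fin 5) ∈ H
  swap
  · exact ⟨1, h1, fun c _ => c 1, fun x => by simp⟩
  by_cases h2 : (2 : Fin 5) ∈ H
  swap
  · exact ⟨2, h2, fun c _ => c 2, fun x => by simp⟩
  by_cases h3 : (3 : Fin 5) ∈ H
  · refine ⟨4, fun h4 => hne ?_, fun c s => c 3 - s ⟨3, h3⟩, fun x => by simp⟩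
    ext i
    fin_cases i <;> simp [*]
  · by_cases h4 : (4 : Fin 5) ∈ H
    · exact ⟨3, h3, fun c s => c 3 - s ⟨4, h4⟩, fun x => by simp⟩
    · refine absurd (Or.inl ?_) habs
      ext i
      fin_cases i <;> simp [*]

/-- for m = 5 (messages indexed 0,…,4 standing for 1,…,5) with absent
receivers exactly {1,2,3}, {2,3,4} and {3,4,5}, the optimal broadcast rate is 4 for every field size. -/
theorem example_rate_four_U3 (F : Type) [Field F] [Fintype F] :
    pliableRate F 5
      ({H : Set (Fin 5) | H ≠ Set.univ} \ {({0,1,2} : Set (Fin 5)), {1,2,3}, {2,3,4}})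
      = 4 := by
  refine IsLeast.csInf_eq ⟨⟨_, isPliableCode_four F⟩, ?_⟩
  rintro ℓ ⟨E, hE⟩
  obtain ⟨j, hj⟩ := exists_determined_singleton hE (k := 3) (by
    rintro H (rfl | rfl | rfl) <;> rw [Set.ncard_eq_toFinset_card'] <;> simp)
  have := le_length_of_determined hj
  omega
end
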